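/- Let D be a dictionary in a real Hilbert space X whose symmetric convex hull co(D) is compact, let f ∈ X, and let h ∈ X with ‖h‖_{L1(D)} < ∞. Then any sequence (f_n) produced by the orthogonal greedy algorithm with target f satisfies ‖f − f_n‖² ≤ ‖f − h‖² + 4 ((n! V_n)^{2/n} / n) · ‖h‖²_{L1(D)} · ε_n(co(D))² for all n ≥ 1. -/

import Mathlib

open scoped RealInnerProductSpace

/-- Dyadic entropy number: infimum of all `ε > 0` such that `K` is covered by `2^n`
balls of radius `ε`. -/
noncomputable def entropyNumber {X : Type*} [NormedAddCommGroup X] (n : ℕ) (K : Set X) : ℝ :=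
  sInf {ε : ℝ | 0 < ε ∧ ∃ c : Fin (2 ^ n) → X, K ⊆ ⋃ i, Metric.closedBall (c i) ε}

/-- Symmetric (absolutely) convex hull: closure of the set of finite sums `∑ cᵢ gᵢ`
with `gᵢ ∈ K` and `∑ |cᵢ| ≤ 1`. -/
noncomputable def symConvexHull {X : Type*} [NormedAddCommGroup X] [NormedSpace ℝ X]
    (K : Set X) : Set X :=
  closure {x : X | ∃ (m : ℕ) (c : Fin m → ℝ) (g : Fin m → X),
    (∀ i, g i ∈ K) ∧ (∑ i, |c i|) ≤ 1 ∧ x = ∑ i, c i • g i}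

/-- Volume of the unit Euclidean ball in `ℝⁿ`. -/
noncomputable def unitBallVol (n : ℕ) : ℝ :=
  Real.pi ^ ((n : ℝ) / 2) / Real.Gamma ((n : ℝ) / 2 + 1)

/-- Span of the first `n` terms of a sequence. -/
noncomputable def spanFirst {X : Type*} [NormedAddCommGroup X] [NormedSpace ℝ X]
    (f : ℕ → X) (n : ℕ) : Submodule ℝ X :=
  Submodule.span ℝ (f '' {i | i < n})

/-- The weak greedy algorithm with parameter `γ`: `f n` (the `(n+1)`-st iterate) lies in `K`
and its distance to the span of the previous iterates is at least `γ` times that of any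
other element of `K`. -/
def IsWeakGreedy {X : Type*} [NormedAddCommGroup X] [NormedSpace ℝ X]
    (γ : ℝ) (K : Set X) (f : ℕ → X) : Prop :=
  ∀ n : ℕ, f n ∈ K ∧ ∀ g ∈ K,
    γ * Metric.infDist g (spanFirst f n : Set X) ≤ Metric.infDist (f n) (spanFirst f n : Set X)

/-- The greedy error `σ_n(K) = sup_{f ∈ K} dist(f, span{f_1,…,f_n})`. -/
noncomputable def greedyError {X : Type*} [NormedAddCommGroup X] [NormedSpace ℝ X]
    (K : Set X) (f : ℕ → X) (n : ℕ) : ℝ :=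
  sSup ((fun g => Metric.infDist g (spanFirst f n : Set X)) '' K)

/-- Kolmogorov `n`-width. -/
noncomputable def kolmogorovWidth {X : Type*} [NormedAddCommGroup X] [NormedSpace ℝ X]
    (n : ℕ) (K : Set X) : ℝ :=
  sInf {d : ℝ | ∃ Y : Submodule ℝ X, FiniteDimensional ℝ Y ∧ Module.finrank ℝ Y ≤ n ∧
    d = sSup ((fun g => Metric.infDist g (Y : Set X)) '' K)}

/-- `f` admits an `ℓ¹` representation over the dictionary `D`. -/
def HasL1Rep {X : Type*} [NormedAddCommGroup X] [NormedSpace ℝ X] (D : Set X) (f : X) : Prop :=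
  ∃ (c : ℕ → ℝ) (g : ℕ → X), (∀ i, g i ∈ D) ∧ Summable (fun i => |c i|) ∧
    HasSum (fun i => c i • g i) f

/-- The variation norm `‖f‖_{L₁(D)}`. -/
noncomputable def varNorm {X : Type*} [NormedAddCommGroup X] [NormedSpace ℝ X]
    (D : Set X) (f : X) : ℝ :=
  sInf {t : ℝ | ∃ (c : ℕ → ℝ) (g : ℕ → X), (∀ i, g i ∈ D) ∧ Summable (fun i => |c i|) ∧
    HasSum (fun i => c i • g i) f ∧ t = ∑' i, |c i|}

/-- The orthogonal greedy algorithm with target `f`: `fa 0 = 0`; at each step `g n ∈ D`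
maximizes `|⟨g, f - fa n⟩|` over `D`, and `fa (n+1)` is the orthogonal projection of `f`
onto `span{g 0, …, g n}`. -/
def IsOGA {X : Type*} [NormedAddCommGroup X] [InnerProductSpace ℝ X]
    (D : Set X) (f : X) (g fa : ℕ → X) : Prop :=
  fa 0 = 0 ∧ ∀ n : ℕ,
    g n ∈ D ∧ (∀ h ∈ D, |⟪h, f - fa n⟫| ≤ |⟪g n, f - fa n⟫|) ∧
    fa (n + 1) ∈ Submodule.span ℝ (g '' {i | i ≤ n}) ∧
    ∀ w ∈ Submodule.span ℝ (g '' {i | i ≤ n}), ⟪f - fa (n + 1), w⟫ = 0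

/-- Best `n`-term approximation error `E_n(f, D)`. -/
noncomputable def bestNTermError {X : Type*} [NormedAddCommGroup X] [NormedSpace ℝ X]
    (D : Set X) (n : ℕ) (f : X) : ℝ :=
  sInf {r : ℝ | ∃ (c : Fin n → ℝ) (g : Fin n → X), (∀ i, g i ∈ D) ∧ r = ‖f - ∑ i, c i • g i‖}

/-- The K-functional `K(t, g)` between `X` and `L₁(D)`. -/
noncomputable def Kfunctional {X : Type*} [NormedAddCommGroup X] [NormedSpace ℝ X]
    (D : Set X) (t : ℝ) (gg : X) : ℝ :=
  sInf {s : ℝ | ∃ h : X, HasL1Rep D h ∧ s = ‖gg - h‖ + t * varNorm D h}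

/-- The interpolation norm `‖g‖_θ = sup_{t > 0} t^{-θ} K(t, g)`. -/
noncomputable def interpNorm {X : Type*} [NormedAddCommGroup X] [NormedSpace ℝ X]
    (D : Set X) (θ : ℝ) (gg : X) : ℝ :=
  sSup ((fun t => t ^ (-θ) * Kfunctional D t gg) '' Set.Ioi (0 : ℝ))

open InnerProductSpace MeasureTheory

/-- The coordinate map of a finite orthonormal family is `1`-Lipschitz. -/
lemma Orthonormal.dist_toLp_inner_le {ι X : Type*} [Fintype ι] [NormedAddCommGroup X]
    [InnerProductSpace ℝ X] {e : ι → X} (he : Orthonormal ℝ e) (x y : X) :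
    dist (WithLp.toLp 2 fun i => ⟪e i, x⟫ : EuclideanSpace ℝ ι)
      (WithLp.toLp 2 fun i => ⟪e i, y⟫) ≤ dist x y := by
  rw [EuclideanSpace.dist_eq, dist_eq_norm x y]
  refine Real.sqrt_le_iff.2 ⟨norm_nonneg _, ?_⟩
  calc ∑ i, dist ⟪e i, x⟫ ⟪e i, y⟫ ^ 2 = ∑ i, ‖⟪e i, x - y⟫‖ ^ 2 := by
        simp [dist_eq_norm, inner_sub_right]
    _ ≤ ‖x - y‖ ^ 2 := he.sum_inner_products_le _

lemma unitBallVol_pos (n : ℕ) : 0 < unitBallVol n :=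
  div_pos (Real.rpow_pos_of_pos Real.pi_pos _) (Real.Gamma_pos_of_pos (by positivity))

lemma volume_closedBall_eq_unitBallVol {n : ℕ} [NeZero n] (x : EuclideanSpace ℝ (Fin n)) (r : ℝ) :
    volume (Metric.closedBall x r) = ENNReal.ofReal r ^ n * ENNReal.ofReal (unitBallVol n) := by
  have hpow : √Real.pi ^ n = Real.pi ^ ((n : ℝ) / 2) := by
    rw [Real.sqrt_eq_rpow, ← Real.rpow_natCast, ← Real.rpow_mul Real.pi_pos.le]
    ring_nf
  rw [EuclideanSpace.volume_closedBall, Fintype.card_fin, hpow, unitBallVol]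

/-- If the image of the open `ℓ¹` unit ball under a square matrix is covered by `N` Euclidean balls
of radius `ε`, then comparing volumes bounds the determinant of the matrix. -/
lemma Matrix.abs_det_mul_two_pow_le_of_cover {n N : ℕ} [NeZero n] (A : Matrix (Fin n) (Fin n) ℝ)
    {ε : ℝ} (hε : 0 ≤ ε) (c : Fin N → EuclideanSpace ℝ (Fin n))
    (hc : ∀ x : Fin n → ℝ, ∑ i, |x i| < 1 →
      ∃ j, WithLp.toLp 2 (A.mulVec x) ∈ Metric.closedBall (c j) ε) :
    |A.det| * 2 ^ n ≤ N * (n.factorial * unitBallVol n * ε ^ n) := by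
  have hball : volume {x : Fin n → ℝ | ∑ i, |x i| < 1} =
      ENNReal.ofReal (2 ^ n / n.factorial) := by
    have := volume_sum_rpow_lt_one (Fin n) (le_refl (1 : ℝ))
    simpa [Real.Gamma_nat_eq_factorial, one_add_one_eq_two, Real.Gamma_two] using this
  have hsub : Matrix.toLin' A '' {x : Fin n → ℝ | ∑ i, |x i| < 1} ⊆
      ⋃ j, (WithLp.toLp 2) ⁻¹' Metric.closedBall (c j) ε := by
    rintro _ ⟨x, hx, rfl⟩
    obtain ⟨j, hj⟩ := hc x hx
    exact Set.mem_iUnion.2 ⟨j, by simpa using hj⟩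
  have hvol := (measure_mono hsub).trans (measure_iUnion_fintype_le volume _)
  rw [Measure.addHaar_image_linearMap, LinearMap.det_toLin', hball] at hvol
  simp only [(PiLp.volume_preserving_toLp (Fin n)).measure_preimage
    measurableSet_closedBall.nullMeasurableSet, volume_closedBall_eq_unitBallVol,
    Finset.sum_const, Finset.card_univ, Fintype.card_fin, nsmul_eq_mul] at hvol
  rw [← ENNReal.ofReal_pow hε, ← ENNReal.ofReal_mul (by positivity),
    ← ENNReal.ofReal_mul (by positivity), ← ENNReal.ofReal_natCast,
    ← ENNReal.ofReal_mul (by positivity), ENNReal.ofReal_le_ofReal_iff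
      (mul_nonneg (by positivity) (mul_nonneg (by positivity) (unitBallVol_pos n).le))] at hvol
  have hfac : (0 : ℝ) < n.factorial := by positivity
  rw [← mul_div_assoc, div_le_iff₀ hfac] at hvol
  linarith

section Greedy

variable {X : Type*} [NormedAddCommGroup X] [InnerProductSpace ℝ X]

lemma inner_gramSchmidt_self_right (g : ℕ → X) (k : ℕ) :
    ⟪gramSchmidt ℝ g k, g k⟫ = ‖gramSchmidt ℝ g k‖ ^ 2 := by
  conv_lhs => rw [gramSchmidt_def'' ℝ g k]
  rw [inner_add_right, inner_sum, Finset.sum_eq_zero, real_inner_self_eq_norm_sq, add_zero]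
  intro i hi
  rw [inner_smul_right, gramSchmidt_orthogonal ℝ g (Finset.mem_Iio.1 hi).ne', mul_zero]

/-- A covering of the symmetric convex hull of `D` by `2 ^ n` balls of radius `ε` bounds the
product of the first `n` Gram–Schmidt lengths of a sequence in `D`. -/
lemma prod_norm_gramSchmidt_le_of_cover {D : Set X} {g : ℕ → X} (hg : ∀ i, g i ∈ D)
    {n : ℕ} [NeZero n] (hne : ∀ k < n, gramSchmidt ℝ g k ≠ 0) {ε : ℝ} (hε : 0 ≤ ε)
    {c : Fin (2 ^ n) → X} (hc : symConvexHull D ⊆ ⋃ i, Metric.closedBall (c i) ε) :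
    ∏ k ∈ Finset.range n, ‖gramSchmidt ℝ g k‖ ≤ n.factorial * unitBallVol n * ε ^ n := by
  set e : Fin n → X := fun i => gramSchmidtNormed ℝ g i with he_def
  have he : Orthonormal ℝ e := by
    refine ⟨fun i => gramSchmidtNormed_unit_length' ?_, fun i j hij => ?_⟩
    · simpa [gramSchmidtNormed] using hne i i.2
    · simp [he_def, gramSchmidtNormed, inner_smul_left, inner_smul_right,
        gramSchmidt_orthogonal ℝ g (Fin.val_injective.ne hij)]
  set A : Matrix (Fin n) (Fin n) ℝ := Matrix.of fun i j => ⟪e i, g j⟫ with hA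
  have hdet : A.det = ∏ k ∈ Finset.range n, ‖gramSchmidt ℝ g k‖ := by
    rw [Matrix.det_of_isUpperTriangular, Finset.prod_range]
    · refine Finset.prod_congr rfl fun i _ => ?_
      have := norm_ne_zero_iff.2 (hne i i.2)
      simp only [hA, he_def, gramSchmidtNormed, Matrix.of_apply, inner_smul_left,
        inner_gramSchmidt_self_right, RCLike.conj_to_real, RCLike.ofReal_real_eq_id, id]
      field_simp
    · intro i j hij
      simp [hA, he_def, gramSchmidtNormed, inner_smul_left,
        gramSchmidt_inv_triangular ℝ g (show (j : ℕ) < i from hij)]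
  have hcover := A.abs_det_mul_two_pow_le_of_cover hε
    (fun j => WithLp.toLp 2 fun i => ⟪e i, c j⟫) fun x hx => by
      have hmem : ∑ i, x i • g i ∈ symConvexHull D :=
        subset_closure ⟨n, x, fun i => g i, fun i => hg i, hx.le, rfl⟩
      obtain ⟨j, hj⟩ := Set.mem_iUnion.1 (hc hmem)
      refine ⟨j, (le_of_eq ?_).trans ((he.dist_toLp_inner_le _ _).trans hj)⟩
      congr 2
      ext i
      simp [hA, Matrix.mulVec, dotProduct, inner_sum, inner_smul_right, mul_comm]
  rw [hdet, abs_of_nonneg (Finset.prod_nonneg fun _ _ => norm_nonneg _)] at hcover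
  push_cast at hcover
  have h2 : (0 : ℝ) < 2 ^ n := by positivity
  nlinarith

lemma abs_inner_le_varNorm_mul {D : Set X} {h : X} (hh : HasL1Rep D h) {r : X} {s : ℝ}
    (hs : ∀ v ∈ D, |⟪v, r⟫| ≤ s) : |⟪h, r⟫| ≤ varNorm D h * s := by
  have key : ∀ t ∈ {t : ℝ | ∃ (c : ℕ → ℝ) (g : ℕ → X), (∀ i, g i ∈ D) ∧
      Summable (fun i => |c i|) ∧ HasSum (fun i => c i • g i) h ∧ t = ∑' i, |c i|},
      |⟪h, r⟫| ≤ t * s := by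
    rintro _ ⟨c, g, hg, hc, hsum, rfl⟩
    have hinner : HasSum (fun i => c i * ⟪g i, r⟫) ⟪h, r⟫ := by
      simpa [real_inner_comm, inner_smul_right] using hsum.mapL (innerSL ℝ r)
    rw [← tsum_mul_right, ← hinner.tsum_eq, ← Real.norm_eq_abs]
    refine tsum_of_norm_bounded (hc.mul_right s).hasSum fun i => ?_
    rw [norm_mul, Real.norm_eq_abs, Real.norm_eq_abs]
    exact mul_le_mul_of_nonneg_left (hs _ (hg i)) (abs_nonneg _)
  obtain ⟨c, g, hg, hc, hsum⟩ := hh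
  have hs0 : 0 ≤ s := (abs_nonneg _).trans (hs _ (hg 0))
  rcases hs0.eq_or_lt with rfl | hs0
  · simpa using key _ ⟨c, g, hg, hc, hsum, rfl⟩
  · rw [← div_le_iff₀ hs0]
    exact le_csInf ⟨_, c, g, hg, hc, hsum, rfl⟩ fun t ht => (div_le_iff₀ hs0).2 (key t ht)

lemma varNorm_nonneg (D : Set X) (h : X) : 0 ≤ varNorm D h :=
  Real.sInf_nonneg fun _ ⟨_, _, _, _, _, ht⟩ => ht ▸ tsum_nonneg fun _ => abs_nonneg _

namespace IsOGA

variable {D : Set X} {f : X} {g fa : ℕ → X}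

lemma mem_span (H : IsOGA D f g fa) (k : ℕ) : fa k ∈ Submodule.span ℝ (g '' Set.Iio k) := by
  cases k with
  | zero => simp [H.1]
  | succ k =>
    refine Submodule.span_mono (Set.image_mono fun i hi => ?_) (H.2 k).2.2.1
    exact Nat.lt_succ_of_le hi

lemma inner_residual_eq_zero (H : IsOGA D f g fa) (k : ℕ) {w : X}
    (hw : w ∈ Submodule.span ℝ (g '' Set.Iio k)) : ⟪f - fa k, w⟫ = 0 := by
  cases k with
  | zero => simp_all
  | succ k =>
    refine (H.2 k).2.2.2 w (Submodule.span_mono (Set.image_mono fun i hi => ?_) hw)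
    exact Nat.le_of_lt_succ hi

lemma inner_residual_gramSchmidt (H : IsOGA D f g fa) (k : ℕ) :
    ⟪f - fa k, gramSchmidt ℝ g k⟫ = ⟪g k, f - fa k⟫ := by
  rw [real_inner_comm (f - fa k) (g k), gramSchmidt_def'' ℝ g k, inner_add_right,
    inner_sum, Finset.sum_eq_zero, add_zero]
  intro i hi
  rw [inner_smul_right, H.inner_residual_eq_zero k, mul_zero]
  rw [← span_gramSchmidt_Iio ℝ]
  exact Submodule.subset_span ⟨i, Finset.mem_Iio.1 hi, rfl⟩

lemma norm_residual_succ_le (H : IsOGA D f g fa) (k : ℕ) (t : ℝ) :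
    ‖f - fa (k + 1)‖ ^ 2 ≤ ‖f - fa k - t • gramSchmidt ℝ g k‖ ^ 2 := by
  have hspan : g '' Set.Iio (k + 1) = g '' Set.Iic k := by
    congr 1; ext; simp
  have hw : fa (k + 1) - fa k - t • gramSchmidt ℝ g k ∈
      Submodule.span ℝ (g '' Set.Iio (k + 1)) := by
    refine Submodule.sub_mem _ (Submodule.sub_mem _ (H.mem_span _) ?_) (Submodule.smul_mem _ _ ?_)
    · refine Submodule.span_mono (Set.image_mono fun i hi => ?_) (H.mem_span k)
      exact Nat.lt_succ_of_lt hi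
    · rw [hspan]
      exact gramSchmidt_mem_span ℝ g le_rfl
  have hdecomp : f - fa k - t • gramSchmidt ℝ g k =
      (f - fa (k + 1)) + (fa (k + 1) - fa k - t • gramSchmidt ℝ g k) := by abel
  rw [hdecomp, norm_add_sq_real, H.inner_residual_eq_zero _ hw]
  nlinarith [sq_nonneg ‖fa (k + 1) - fa k - t • gramSchmidt ℝ g k‖]

lemma antitone_norm_residual_sq (H : IsOGA D f g fa) : Antitone fun k => ‖f - fa k‖ ^ 2 :=
  antitone_nat_of_succ_le fun k => by simpa using H.norm_residual_succ_le k 0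

lemma norm_residual_succ_sq_le_sub (H : IsOGA D f g fa) (k : ℕ) :
    ‖f - fa (k + 1)‖ ^ 2 ≤
      ‖f - fa k‖ ^ 2 - ⟪g k, f - fa k⟫ ^ 2 / ‖gramSchmidt ℝ g k‖ ^ 2 := by
  rcases eq_or_ne (gramSchmidt ℝ g k) 0 with h0 | h0
  · simpa [h0] using H.norm_residual_succ_le k 0
  have hpos : ‖gramSchmidt ℝ g k‖ ≠ 0 := norm_ne_zero_iff.2 h0
  refine (H.norm_residual_succ_le k (⟪g k, f - fa k⟫ / ‖gramSchmidt ℝ g k‖ ^ 2)).trans_eq ?_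
  rw [norm_sub_sq_real, inner_smul_right, H.inner_residual_gramSchmidt, norm_smul, mul_pow,
    Real.norm_eq_abs, sq_abs]
  field_simp
  ring

lemma norm_residual_sq_sub_le (H : IsOGA D f g fa) {h : X} (hh : HasL1Rep D h) (k : ℕ) :
    ‖f - fa k‖ ^ 2 - ‖f - h‖ ^ 2 ≤ 2 * varNorm D h * |⟪g k, f - fa k⟫| := by
  have hvar := (le_abs_self _).trans (abs_inner_le_varNorm_mul hh (H.2 k).2.1)
  have hself : ‖f - fa k‖ ^ 2 = ⟪h, f - fa k⟫ + ⟪f - h, f - fa k⟫ := by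
    rw [← inner_add_left, add_sub_cancel, ← real_inner_self_eq_norm_sq, inner_sub_left,
      real_inner_comm (f - fa k) (fa k), H.inner_residual_eq_zero k (H.mem_span k), sub_zero]
  nlinarith [real_inner_le_norm (f - h) (f - fa k), sq_nonneg (‖f - h‖ - ‖f - fa k‖)]

end IsOGA

end Greedy

/-- If `a (k + 1) ≤ a k - (a k) ^ 2 / b k` along positive terms then `(a n)⁻¹` dominates the sum of
the `(b k)⁻¹`. -/
lemma sum_inv_le_inv_of_quadratic_decay {a b : ℕ → ℝ} {n : ℕ} (ha : ∀ k ≤ n, 0 < a k)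
    (hb : ∀ k < n, 0 < b k) (hab : ∀ k < n, a (k + 1) ≤ a k - a k ^ 2 / b k) :
    ∑ k ∈ Finset.range n, (b k)⁻¹ ≤ (a n)⁻¹ := by
  induction n with
  | zero => simpa using (ha 0 le_rfl).le
  | succ n ih =>
    have hsum := ih (fun k hk => ha k (by omega)) (fun k hk => hb k (by omega))
      (fun k hk => hab k (by omega))
    have h0 := ha n (by omega)
    have h1 := ha (n + 1) le_rfl
    have hbn := hb n (by omega)
    have hstep := hab n (by omega)
    have hinv : (a n)⁻¹ + (b n)⁻¹ ≤ (a (n + 1))⁻¹ := by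
      rw [le_inv_comm₀ (by positivity) h1, ← one_div, le_div_iff₀ (by positivity)]
      have hle : a (n + 1) * ((a n)⁻¹ + (b n)⁻¹) ≤
          (a n - a n ^ 2 / b n) * ((a n)⁻¹ + (b n)⁻¹) :=
        mul_le_mul_of_nonneg_right hstep (by positivity)
      have hexp : (a n - a n ^ 2 / b n) * ((a n)⁻¹ + (b n)⁻¹) = 1 - (a n / b n) ^ 2 := by
        field_simp; ring
      linarith [sq_nonneg (a n / b n)]
    rw [Finset.sum_range_succ]
    linarith

/-- The harmonic mean is at most the geometric mean, for squares and in product form. -/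
lemma card_le_rpow_prod_mul_sum_inv_sq {n : ℕ} (hn : 1 ≤ n) {d : ℕ → ℝ}
    (hd : ∀ k < n, 0 < d k) :
    n ≤ (∏ k ∈ Finset.range n, d k) ^ ((2 : ℝ) / n) *
      ∑ k ∈ Finset.range n, (d k ^ 2)⁻¹ := by
  have hn0 : (0 : ℝ) < n := by exact_mod_cast hn
  have hP : 0 < ∏ k ∈ Finset.range n, d k :=
    Finset.prod_pos fun k hk => hd k (Finset.mem_range.1 hk)
  have amgm := Real.geom_mean_le_arith_mean (Finset.range n) (fun _ => 1)
    (fun k => (d k ^ 2)⁻¹) (fun _ _ => zero_le_one) (by simpa using Nat.pos_of_ne_zero (by omega))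
    (fun _ _ => by positivity)
  simp only [Real.rpow_one, Finset.sum_const, Finset.card_range, nsmul_eq_mul, mul_one,
    one_mul, Finset.prod_inv_distrib, Finset.prod_pow] at amgm
  have hpow : (((∏ k ∈ Finset.range n, d k) ^ 2)⁻¹) ^ ((n : ℝ)⁻¹) =
      ((∏ k ∈ Finset.range n, d k) ^ ((2 : ℝ) / n))⁻¹ := by
    rw [Real.inv_rpow (by positivity), ← Real.rpow_natCast, ← Real.rpow_mul hP.le]
    norm_num [div_eq_mul_inv]
  rw [hpow, le_div_iff₀ hn0, inv_mul_le_iff₀ (by positivity)] at amgm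
  exact amgm

/-- An upper bound by `ε ^ 2` valid for every admissible covering radius passes to the entropy
number. -/
lemma le_mul_entropyNumber_sq {X : Type*} [NormedAddCommGroup X] {K : Set X}
    (hK : Bornology.IsBounded K) {n : ℕ} {a C : ℝ} (hC : 0 < C)
    (H : ∀ ε > 0, (∃ c : Fin (2 ^ n) → X, K ⊆ ⋃ i, Metric.closedBall (c i) ε) → a ≤ C * ε ^ 2) :
    a ≤ C * entropyNumber n K ^ 2 := by
  obtain ⟨R, hR⟩ := hK.subset_closedBall 0
  have hne : {ε : ℝ | 0 < ε ∧
      ∃ c : Fin (2 ^ n) → X, K ⊆ ⋃ i, Metric.closedBall (c i) ε}.Nonempty := by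
    refine ⟨max R 1, by positivity, fun _ => 0, fun x hx => ?_⟩
    refine Set.mem_iUnion.2 ⟨⟨0, by positivity⟩, ?_⟩
    exact Metric.closedBall_subset_closedBall (le_max_left _ _) (hR hx)
  have hsqrt : √(a / C) ≤ entropyNumber n K :=
    le_csInf hne fun ε ⟨hε, hc⟩ =>
      Real.sqrt_le_iff.2 ⟨hε.le, (div_le_iff₀' hC).2 (H ε hε hc)⟩
  rw [← div_le_iff₀' hC]
  exact (Real.sqrt_le_left ((Real.sqrt_nonneg _).trans hsqrt)).1 hsqrt

/-- OGA error bound for general targets `f` measured against any `h` of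
finite variation norm (Corollary 4.2 of the paper). -/
theorem oga_error_sq_le_of_general_target
    {X : Type*} [NormedAddCommGroup X] [InnerProductSpace ℝ X] [CompleteSpace X]
    (D : Set X) (hD : IsCompact (symConvexHull D))
    (f : X) (h : X) (hh : HasL1Rep D h)
    (g fa : ℕ → X) (hoga : IsOGA D f g fa) (n : ℕ) (hn : 1 ≤ n) :
    ‖f - fa n‖ ^ 2
      ≤ ‖f - h‖ ^ 2 + 4 * (((n.factorial : ℝ) * unitBallVol n) ^ ((2 : ℝ) / n) / n) *
          varNorm D h ^ 2 * entropyNumber n (symConvexHull D) ^ 2 := by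
  have hn0 : (0 : ℝ) < n := by exact_mod_cast hn
  have : NeZero n := ⟨by omega⟩
  set M := varNorm D h
  have hM0 : 0 ≤ M := varNorm_nonneg D h
  have hV := unitBallVol_pos n
  set C : ℝ := ((n.factorial : ℝ) * unitBallVol n) ^ ((2 : ℝ) / n) / n with hC_def
  have hC : 0 < C := by positivity
  rw [← sub_le_iff_le_add']
  rcases le_or_gt (‖f - fa n‖ ^ 2 - ‖f - h‖ ^ 2) 0 with hneg | hpos
  · exact hneg.trans (by positivity)
  set a : ℕ → ℝ := fun k => ‖f - fa k‖ ^ 2 - ‖f - h‖ ^ 2 with ha_def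
  have ha : ∀ k ≤ n, 0 < a k := fun k hk =>
    hpos.trans_le (sub_le_sub_right (hoga.antitone_norm_residual_sq hk) _)
  have hbound : ∀ k, a k ≤ 2 * M * |⟪g k, f - fa k⟫| := hoga.norm_residual_sq_sub_le hh
  have hM : 0 < M := by
    refine hM0.lt_of_ne fun hM => ?_
    have := (ha n le_rfl).trans_le (hbound n)
    simp [← hM] at this
  have hgs : ∀ k < n, gramSchmidt ℝ g k ≠ 0 := by
    intro k hk h0
    have hinner := hoga.inner_residual_gramSchmidt k
    have := (ha k hk.le).trans_le (hbound k)
    simp [← hinner, h0] at this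
  have hd : ∀ k < n, 0 < ‖gramSchmidt ℝ g k‖ := fun k hk => norm_pos_iff.2 (hgs k hk)
  have hdecay := sum_inv_le_inv_of_quadratic_decay (a := a)
    (b := fun k => 4 * M ^ 2 * ‖gramSchmidt ℝ g k‖ ^ 2) (n := n) ha
    (fun k hk => by have := hd k hk; positivity) (fun k hk => by
      have hdk := hd k hk
      have hstep := hoga.norm_residual_succ_sq_le_sub k
      have hsq : a k ^ 2 ≤ 4 * M ^ 2 * ⟪g k, f - fa k⟫ ^ 2 := by
        have := pow_le_pow_left₀ (ha k hk.le).le (hbound k) 2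
        rw [mul_pow, mul_pow, sq_abs] at this
        linarith
      have hdiv : a k ^ 2 / (4 * M ^ 2 * ‖gramSchmidt ℝ g k‖ ^ 2) ≤
          ⟪g k, f - fa k⟫ ^ 2 / ‖gramSchmidt ℝ g k‖ ^ 2 := by
        rw [← div_div]
        gcongr
        rwa [div_le_iff₀' (by positivity)]
      simp only [ha_def] at hdiv ⊢
      linarith)
  have hmean := card_le_rpow_prod_mul_sum_inv_sq hn hd
  refine le_mul_entropyNumber_sq hD.isBounded (by positivity) fun ε hε ⟨c, hc⟩ => ?_
  have hprod := prod_norm_gramSchmidt_le_of_cover (fun i => (hoga.2 i).1) hgs hε.le hc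
  set P := ∏ k ∈ Finset.range n, ‖gramSchmidt ℝ g k‖
  have hP0 : 0 ≤ P := Finset.prod_nonneg fun _ _ => norm_nonneg _
  have hPC : P ^ ((2 : ℝ) / n) ≤ n * C * ε ^ 2 := by
    refine (Real.rpow_le_rpow hP0 hprod (by positivity)).trans_eq ?_
    rw [Real.mul_rpow (by positivity) (by positivity), ← Real.rpow_natCast ε n,
      ← Real.rpow_mul hε.le, mul_div_cancel₀ _ hn0.ne', Real.rpow_two, hC_def,
      mul_div_cancel₀ _ hn0.ne']
  simp only [mul_inv_rev (4 * M ^ 2), ← Finset.sum_mul] at hdecay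
  set S := ∑ k ∈ Finset.range n, (‖gramSchmidt ℝ g k‖ ^ 2)⁻¹
  have hS0 : 0 ≤ S := Finset.sum_nonneg fun _ _ => by positivity
  have hSa : S * a n ≤ 4 * M ^ 2 := by
    rw [← div_eq_mul_inv, div_le_iff₀ (by positivity), inv_mul_eq_div, le_div_iff₀ hpos] at hdecay
    exact hdecay
  have hCS : 1 ≤ C * ε ^ 2 * S := by
    have : (n : ℝ) * 1 ≤ n * (C * ε ^ 2 * S) := by
      nlinarith [mul_le_mul_of_nonneg_right hPC hS0]
    exact le_of_mul_le_mul_left this hn0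
  calc a n ≤ C * ε ^ 2 * S * a n := le_mul_of_one_le_left hpos.le hCS
    _ = C * ε ^ 2 * (S * a n) := by ring
    _ ≤ C * ε ^ 2 * (4 * M ^ 2) := by gcongr
    _ = 4 * C * M ^ 2 * ε ^ 2 := by ring
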